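/- arXiv:1905.08925 — 9 statements merged into one kernel-verified Lean document; each statement's English description precedes it below -/
import Mathlib

section
/- Every strategyproof deterministic allocation algorithm is monotone in the following sense. Let A be SP, let c = (c_1,…,c_n) be a profile, let i be an agent whose cost vector c_i assigns distinct total costs to distinct subsets of M, and let x = A(c). (a) If item j is not in x_i and c' is the profile obtained from c by only increasing c_{ij} (to some c'_{ij} > c_{ij}), then A(c')_i = x_i. (b) If item j is in x_i and c' is obtained from c by only decreasing c_{ij} (to some c'_{ij} < c_{ij}), then A(c')_i = x_i. -/
/-- Changing one value of `f` shifts a finite sum by the change if the index is summed over. -/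
theorem sum_update_eq_add_ite {ι : Type*} [DecidableEq ι] (S : Finset ι) (f : ι → ℝ)
    (j : ι) (v : ℝ) :
    ∑ k ∈ S, Function.update f j v k = ∑ k ∈ S, f k + if j ∈ S then v - f j else 0 := by
  split_ifs with h
  · rw [Finset.sum_update_of_mem h, ← Finset.add_sum_erase S f h, Finset.sdiff_singleton_eq_erase]
    ring
  · rw [Finset.sum_update_of_notMem h, add_zero]

/-- every strategyproof deterministic allocation algorithm is monotone.
An algorithm maps cost profiles `c : Fin n → Fin m → ℝ` (nonnegative) to allocations
`Fin m → Fin n` (item `j` goes to agent `A c j`); agent `i`'s bundle is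
`{j | A c j = i}`.  Strategyproofness: no agent can decrease the true cost of her
bundle by misreporting.  If agent `i`'s cost vector gives distinct totals to
distinct subsets, then (a) increasing the cost of an item not in her bundle, or
(b) decreasing the cost of an item in her bundle, leaves her bundle unchanged. -/
theorem sp_implies_monotone (n m : ℕ)
    (A : (Fin n → Fin m → ℝ) → (Fin m → Fin n))
    (hSP : ∀ (c : Fin n → Fin m → ℝ), (∀ i' j', 0 ≤ c i' j') →
      ∀ (i : Fin n) (c'i : Fin m → ℝ), (∀ j', 0 ≤ c'i j') →
      ∑ j ∈ Finset.univ.filter (fun j => A c j = i), c i j ≤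
        ∑ j ∈ Finset.univ.filter (fun j => A (Function.update c i c'i) j = i), c i j)
    (c : Fin n → Fin m → ℝ) (hc : ∀ i' j', 0 ≤ c i' j') (i : Fin n)
    (hdist : ∀ S T : Finset (Fin m), S ≠ T → ∑ j ∈ S, c i j ≠ ∑ j ∈ T, c i j)
    (j : Fin m) (v : ℝ) :
    -- (a) increasing the cost of an item outside agent i's bundle
    (A c j ≠ i → c i j < v →
      Finset.univ.filter
          (fun j' => A (Function.update c i (Function.update (c i) j v)) j' = i) =
        Finset.univ.filter (fun j' => A c j' = i)) ∧
    -- (b) decreasing the cost of an item inside agent i's bundle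
    (A c j = i → 0 ≤ v → v < c i j →
      Finset.univ.filter
          (fun j' => A (Function.update c i (Function.update (c i) j v)) j' = i) =
        Finset.univ.filter (fun j' => A c j' = i)) := by
  have key : 0 ≤ v →
      (if j ∈ Finset.univ.filter (fun j' => A c j' = i) then v - c i j else 0) ≤
        (if j ∈ Finset.univ.filter
            (fun j' => A (Function.update c i (Function.update (c i) j v)) j' = i)
          then v - c i j else 0) →
      Finset.univ.filter
          (fun j' => A (Function.update c i (Function.update (c i) j v)) j' = i) =
        Finset.univ.filter (fun j' => A c j' = i) := by
    intro hv hshift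
    have hnonneg : ∀ k, 0 ≤ Function.update (c i) j v k := by
      intro k
      rcases eq_or_ne k j with rfl | hk
      · simpa using hv
      · simpa [hk] using hc i k
    have hprofile : ∀ i' k, 0 ≤ Function.update c i (Function.update (c i) j v) i' k := by
      intro i' k
      rcases eq_or_ne i' i with rfl | hi
      · simpa using hnonneg k
      · simpa [hi] using hc i' k
    have htrue := hSP c hc i _ hnonneg
    have hback := hSP _ hprofile i (c i) (hc i)
    rw [Function.update_idem, Function.update_eq_self, Function.update_self,
      sum_update_eq_add_ite, sum_update_eq_add_ite] at hback
    by_contra hne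
    exact hdist _ _ hne (by linarith)
  refine ⟨fun hj hlt => ?_, fun hj hv hlt => ?_⟩
  · refine key ((hc i j).trans hlt.le) ?_
    rw [if_neg (by simpa using hj)]
    split_ifs <;> linarith
  · refine key hv ?_
    rw [if_pos (by simpa using hj)]
    split_ifs <;> linarith
end

section
/- No deterministic ordinal allocation algorithm for 2 agents and 4 chores has approximation ratio smaller than 4/3: for every function A mapping pairs of rankings of the 4 items to allocations, there exist a profile of rankings R = (R_1, R_2) and cost vectors c_1, c_2 consistent with R_1 and R_2 respectively such that, writing x = A(R), some agent i satisfies c_i(x_i) ≥ (4/3)·MMS_i. -/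
/-- The maxmin share of an agent with cost vector `c` over `m` items,
with respect to partitions into `n` (possibly empty) bundles. -/
noncomputable def MMS (n m : ℕ) (c : Fin m → ℝ) : ℝ :=
  ⨅ P : Fin m → Fin n, ⨆ k : Fin n, ∑ j ∈ Finset.univ.filter (fun j => P j = k), c j

/-- Any partition whose bundles all cost at most `b` bounds the maxmin share by `b`. -/
theorem MMS_le {n m : ℕ} [NeZero n] {c : Fin m → ℝ} {b : ℝ} (P : Fin m → Fin n)
    (h : ∀ k, ∑ j ∈ Finset.univ.filter (fun j => P j = k), c j ≤ b) : MMS n m c ≤ b :=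
  (ciInf_le (Set.finite_range _).bddBelow P).trans (ciSup_le h)

/-- The maxmin share is at least the proportional share. -/
theorem sum_le_mul_MMS {n m : ℕ} [NeZero n] (c : Fin m → ℝ) :
    ∑ j, c j ≤ n * MMS n m c := by
  have hn : (0 : ℝ) < n := Nat.cast_pos.2 (NeZero.pos n)
  rw [← div_le_iff₀' hn]
  refine le_ciInf fun P => ?_
  rw [div_le_iff₀' hn, ← Finset.sum_fiberwise Finset.univ P c]
  refine (Finset.sum_le_card_nsmul _ _ _ fun k _ =>
    le_ciSup (f := fun k => ∑ j ∈ Finset.univ.filter (fun j => P j = k), c j)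
      (Set.finite_range _).bddAbove k).trans ?_
  simp

/-- For every allocation of four chores to two agents there is a nonincreasing cost vector, with
positive maxmin share, for which some agent's bundle costs at least `4 / 3` of the share. -/
theorem exists_antitone_cost_of_allocation (x : Fin 4 → Fin 2) :
    ∃ c : Fin 4 → ℝ, (∀ j, 0 ≤ c j) ∧ Antitone c ∧ 0 < MMS 2 4 c ∧
      ∃ i, (4 / 3 : ℝ) * MMS 2 4 c ≤ ∑ j ∈ Finset.univ.filter (fun j => x j = i), c j := by
  by_cases hx : x 1 = x 0 ∨ x 2 = x 0 ∨ x 3 = x 0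
  · have hle : MMS 2 4 ![3, 1, 1, 1] ≤ 3 := by
      refine MMS_le ![0, 1, 1, 1] fun k => ?_
      simp only [Finset.sum_filter, Fin.sum_univ_four]
      fin_cases k
      · simp
      · simp
        norm_num
    have hpos := sum_le_mul_MMS (n := 2) (m := 4) ![3, 1, 1, 1]
    simp [Fin.sum_univ_four] at hpos
    refine ⟨![3, 1, 1, 1], fun j => by fin_cases j <;> simp, ?_, by linarith, x 0, ?_⟩
    · refine Fin.antitone_iff_succ_le.2 fun j => ?_
      fin_cases j <;> simp
    · simp only [Finset.sum_filter, Fin.sum_univ_four]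
      rcases hx with h | h | h <;> simp [h] <;> split_ifs <;> linarith
  · have hle : MMS 2 4 (fun _ => 1) ≤ 2 := by
      refine MMS_le ![0, 0, 1, 1] fun k => ?_
      simp only [Finset.sum_filter, Fin.sum_univ_four]
      fin_cases k <;> simp <;> norm_num
    have hpos := sum_le_mul_MMS (n := 2) (m := 4) fun _ => 1
    norm_num at hpos
    refine ⟨fun _ => 1, fun _ => zero_le_one, antitone_const, by linarith, x 1, ?_⟩
    obtain ⟨h1, h2, h3⟩ : x 1 ≠ x 0 ∧ x 2 = x 1 ∧ x 3 = x 1 := by omega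
    simp only [Finset.sum_filter, Fin.sum_univ_four]
    simp [h1.symm, h2, h3]
    linarith

/-- no deterministic ordinal algorithm for 2 agents and 4 chores has
approximation ratio smaller than 4/3.  A ranking is an equiv `R i : Fin 4 ≃ Fin 4`,
`R i k` being the item in position `k` (earlier positions have weakly larger cost).
An ordinal algorithm `A` maps a ranking profile to an allocation `Fin 4 → Fin 2`.
For every such `A` there are rankings `R` and consistent nonnegative cost vectors
`c` such that some agent's bundle costs at least `(4/3)·MMS_i`. -/
theorem ordinal_det_lower_bound
    (A : (Fin 2 → (Fin 4 ≃ Fin 4)) → (Fin 4 → Fin 2)) :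
    ∃ (R : Fin 2 → (Fin 4 ≃ Fin 4)) (c : Fin 2 → Fin 4 → ℝ),
      (∀ i j, 0 ≤ c i j) ∧
      (∀ (i : Fin 2) (k k' : Fin 4), k ≤ k' → c i (R i k') ≤ c i (R i k)) ∧
      ∃ i : Fin 2,
        (4 / 3 : ℝ) * MMS 2 4 (c i) ≤
          ∑ j ∈ Finset.univ.filter (fun j => A R j = i), c i j := by
  obtain ⟨c, hc, hanti, -, hi⟩ := exists_antitone_cost_of_allocation (A fun _ => Equiv.refl _)
  exact ⟨fun _ => Equiv.refl _, fun _ => c, fun _ => hc, fun _ _ _ h => hanti h, hi⟩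
end

section
/- Let n ≥ 2 be an even integer and let m be an integer with m ≥ 4n and 2·log₂(m/n) ≤ n, and set K = 2·log₂(m/n). Then there exist nonnegative integers a_1,…,a_n with ∑_{i=1}^n a_i = m such that a_i = 2 for every i ≤ n/2, and a_i ≤ ⌈K⌉·⌈(a_1+…+a_{i−1})/n⌉ for every i > n/2. -/
/-- Partial sums of the greedy quotas: each step adds the largest allowed quota. -/
noncomputable def greedySum (n k : ℕ) : ℕ → ℕ
  | 0 => n
  | t + 1 => greedySum n k t + k * ⌈(greedySum n k t : ℝ) / n⌉₊

/-- Partial sums of the quota sequence: quota `2` up to `n / 2`, then greedy, truncated at `m`. -/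
noncomputable def quotaSum (n m k i : ℕ) : ℕ :=
  if i < n / 2 then 2 * i else min (greedySum n k (i - n / 2)) m

lemma greedySum_ge (n k t : ℕ) : (n : ℝ) * (1 + (k : ℝ) / n) ^ t ≤ greedySum n k t := by
  induction t with
  | zero => simp [greedySum]
  | succ t ih =>
    have hceil := Nat.le_ceil ((greedySum n k t : ℝ) / n)
    calc (n : ℝ) * (1 + (k : ℝ) / n) ^ (t + 1)
        = (n * (1 + (k : ℝ) / n) ^ t) * (1 + (k : ℝ) / n) := by ring
      _ ≤ greedySum n k t * (1 + (k : ℝ) / n) := by gcongr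
      _ = greedySum n k t + k * ((greedySum n k t : ℝ) / n) := by ring
      _ ≤ greedySum n k t + k * (⌈(greedySum n k t : ℝ) / n⌉₊ : ℝ) := by gcongr
      _ = greedySum n k (t + 1) := by simp [greedySum]

lemma two_rpow_half_le {h k : ℕ} (hk : 0 < k) {x : ℝ} (hx : x = 2 * h) (hkx : (k : ℝ) ≤ x) :
    (2 : ℝ) ^ ((k : ℝ) / 2) ≤ (1 + (k : ℝ) / x) ^ h := by
  have hk' : (0 : ℝ) < k := by exact_mod_cast hk
  have hx0 : 0 < x := hk'.trans_le hkx
  have bernoulli : 1 + x / k * (k / x) ≤ (1 + (k : ℝ) / x) ^ (x / k) :=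
    one_add_mul_self_le_rpow_one_add (by linarith [div_pos hk' hx0]) ((one_le_div hk').2 hkx)
  have htwo : (2 : ℝ) ≤ (1 + (k : ℝ) / x) ^ (x / k) := by
    convert bernoulli using 1
    field_simp
    norm_num
  calc (2 : ℝ) ^ ((k : ℝ) / 2) ≤ ((1 + (k : ℝ) / x) ^ (x / k)) ^ ((k : ℝ) / 2) :=
        Real.rpow_le_rpow (by norm_num) htwo (by positivity)
    _ = (1 + (k : ℝ) / x) ^ (h : ℝ) := by
        rw [← Real.rpow_mul (by positivity)]
        congr 1
        field_simp
        linarith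
    _ = _ := Real.rpow_natCast _ _

lemma le_greedySum_half {n m k : ℕ} (hn : 0 < n) (heven : Even n) (hm : 0 < m) (hk : 0 < k)
    (hkn : k ≤ n) (hK : 2 * Real.logb 2 ((m : ℝ) / n) ≤ k) : m ≤ greedySum n k (n / 2) := by
  have hn' : (0 : ℝ) < n := by exact_mod_cast hn
  have hm' : (0 : ℝ) < m := by exact_mod_cast hm
  have hpow := two_rpow_half_le (h := n / 2) hk (x := n)
    (by exact_mod_cast (Nat.two_mul_div_two_of_even heven).symm) (by exact_mod_cast hkn)
  have hmn : (m : ℝ) / n ≤ 2 ^ ((k : ℝ) / 2) :=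
    (Real.logb_le_iff_le_rpow (by norm_num) (by positivity)).1 (by linarith)
  have hgoal : (m : ℝ) ≤ greedySum n k (n / 2) :=
    calc (m : ℝ) = n * (m / n) := by field_simp
      _ ≤ n * (1 + (k : ℝ) / n) ^ (n / 2) := by gcongr; exact hmn.trans hpow
      _ ≤ _ := greedySum_ge n k _
  exact_mod_cast hgoal

lemma quotaSum_succ_of_lt {n m k i : ℕ} (heven : Even n) (hnm : n ≤ m) (hi : i < n / 2) :
    quotaSum n m k (i + 1) = quotaSum n m k i + 2 := by
  have := Nat.two_mul_div_two_of_even heven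
  by_cases h : i + 1 < n / 2
  · simp [quotaSum, hi, h]
    ring
  · have hsub : i + 1 - n / 2 = 0 := by omega
    simp [quotaSum, hi, h, hsub, greedySum]
    omega

lemma quotaSum_succ_le {n m k i : ℕ} (hi : n / 2 ≤ i) :
    quotaSum n m k (i + 1) ≤ quotaSum n m k i + k * ⌈(quotaSum n m k i : ℝ) / n⌉₊ := by
  have hsub : i + 1 - n / 2 = (i - n / 2) + 1 := by omega
  simp only [quotaSum, hi.not_gt, (hi.trans i.le_succ).not_gt, if_false, hsub]
  rcases le_total m (greedySum n k (i - n / 2)) with h | h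
  · simp [h]
  · rw [min_eq_left h]
    exact min_le_left _ _

lemma quotaSum_monotone {n m k : ℕ} (heven : Even n) (hnm : n ≤ m) :
    Monotone (quotaSum n m k) := by
  refine monotone_nat_of_le_succ fun i => ?_
  by_cases hi : i < n / 2
  · simp [quotaSum_succ_of_lt heven hnm hi]
  · have hsub : i + 1 - n / 2 = (i - n / 2) + 1 := by omega
    simp only [quotaSum, hi, show ¬ i + 1 < n / 2 by omega, if_false, hsub]
    exact min_le_min_right _ (Nat.le_add_right _ _)

lemma Fin.sum_filter_lt_eq_sum_range {M : Type*} [AddCommMonoid M] {n : ℕ} (f : ℕ → M)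
    (i : Fin n) :
    ∑ j ∈ Finset.univ.filter (fun j : Fin n => j < i), f j = ∑ j ∈ Finset.range i, f j := by
  refine Finset.sum_bij (fun j _ => (j : ℕ)) (by simp) (fun _ _ _ _ h => Fin.ext h) ?_ (by simp)
  intro j hj
  have hji := Finset.mem_range.1 hj
  exact ⟨⟨j, hji.trans i.2⟩, Finset.mem_filter.2 ⟨Finset.mem_univ _, hji⟩, rfl⟩

/-- existence of the quota sequence used by SeqPick.  Let `n ≥ 2` be
even, `m ≥ 4n`, `2·log₂(m/n) ≤ n`, and `K = 2·log₂(m/n)`.  Then there are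
nonnegative integers `a 0, …, a (n-1)` summing to `m` with `a i = 2` for the first
`n/2` agents and `a i ≤ ⌈K⌉·⌈(a 0 + … + a (i-1))/n⌉` for the remaining agents. -/
theorem seqPick_quota_exists (n m : ℕ) (hn : 2 ≤ n) (heven : Even n)
    (hm : 4 * n ≤ m)
    (hKn : 2 * Real.logb 2 ((m : ℝ) / (n : ℝ)) ≤ (n : ℝ)) :
    ∃ a : Fin n → ℕ,
      (∑ i, a i) = m ∧
      (∀ i : Fin n, (i : ℕ) < n / 2 → a i = 2) ∧
      (∀ i : Fin n, n / 2 ≤ (i : ℕ) →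
        (a i : ℝ) ≤
          (⌈2 * Real.logb 2 ((m : ℝ) / (n : ℝ))⌉ : ℝ) *
            (⌈(∑ j ∈ Finset.univ.filter (fun j => j < i), a j : ℝ) / (n : ℝ)⌉ : ℝ)) := by
  have hn0 : (0 : ℝ) < n := by exact_mod_cast (by omega : 0 < n)
  have hratio : (1 : ℝ) < (m : ℝ) / n := by
    rw [one_lt_div hn0]
    exact_mod_cast (by omega : n < m)
  have hKpos : 0 < 2 * Real.logb 2 ((m : ℝ) / n) := by
    have := Real.logb_pos (b := 2) (by norm_num) hratio
    positivity
  set K := 2 * Real.logb 2 ((m : ℝ) / n) with hK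
  have hnm : n ≤ m := by omega
  have hmono := quotaSum_monotone (k := ⌈K⌉₊) heven hnm
  have hzero : quotaSum n m ⌈K⌉₊ 0 = 0 := by simp [quotaSum, show 0 < n / 2 by omega]
  have hlast : quotaSum n m ⌈K⌉₊ n = m := by
    have hge := le_greedySum_half (by omega) heven (by omega) (Nat.ceil_pos.2 hKpos)
      (Nat.ceil_le.2 hKn) (Nat.le_ceil K)
    have heven' := Nat.two_mul_div_two_of_even heven
    simpa [quotaSum, show ¬ n < n / 2 by omega, show n - n / 2 = n / 2 by omega] using hge
  have hsum (i : ℕ) : ∑ j ∈ Finset.range i,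
      (quotaSum n m ⌈K⌉₊ (j + 1) - quotaSum n m ⌈K⌉₊ j) = quotaSum n m ⌈K⌉₊ i := by
    rw [Finset.sum_range_tsub hmono, hzero, Nat.sub_zero]
  refine ⟨fun i => quotaSum n m ⌈K⌉₊ (i + 1) - quotaSum n m ⌈K⌉₊ i, ?_, ?_, ?_⟩
  · rw [Fin.sum_univ_eq_sum_range
      (fun j => quotaSum n m ⌈K⌉₊ (j + 1) - quotaSum n m ⌈K⌉₊ j), hsum, hlast]
  · intro i hi
    simp [quotaSum_succ_of_lt heven hnm hi]
  · intro i hi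
    rw [← Nat.cast_sum, Fin.sum_filter_lt_eq_sum_range
      (fun j => quotaSum n m ⌈K⌉₊ (j + 1) - quotaSum n m ⌈K⌉₊ j), hsum,
      ← natCast_ceil_eq_intCast_ceil hKpos.le, ← natCast_ceil_eq_intCast_ceil (by positivity)]
    exact_mod_cast Nat.sub_le_iff_le_add'.2 (quotaSum_succ_le hi)
end

section
/- Suppose an agent picks her a cheapest items from a remaining pool, with s items left over; then her cost is at most (a/⌈s/n⌉) times her maxmin share. Precisely: let agent i have additive nonnegative costs c_{ij} on the item set M (with maxmin share MMS_i defined with respect to partitions into n bundles), let R ⊆ M with |R| = a + s where a ≥ 1 and s ≥ 1, and let S ⊆ R with |S| = a be such that c_{ij} ≤ c_{ij'} for every j ∈ S and j' ∈ R∖S. Then c_i(S) ≤ (a/⌈s/n⌉)·MMS_i. -/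
/-- If every item of `T` costs at least `t`, then some bundle of any partition into `n` bundles
holds at least `⌈|T| / n⌉` items of `T`, so the maxmin share is at least `⌈|T| / n⌉ * t`. -/
theorem ceil_card_div_mul_le_MMS {n m : ℕ} (hn : 0 < n) {c : Fin m → ℝ} (hc : ∀ j, 0 ≤ c j)
    {T : Finset (Fin m)} {t : ℝ} (ht : 0 ≤ t) (hT : ∀ j ∈ T, t ≤ c j) :
    (⌈(T.card : ℝ) / n⌉ : ℝ) * t ≤ MMS n m c := by
  have : Nonempty (Fin n) := ⟨⟨0, hn⟩⟩
  have hn' : (n : ℝ) ≠ 0 := by positivity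
  refine le_ciInf fun P => ?_
  obtain ⟨k, -, hk⟩ := Finset.exists_le_card_fiber_of_nsmul_le_card_of_maps_to
    (s := T) (t := Finset.univ) (f := P) (b := (T.card : ℝ) / n)
    (fun _ _ => Finset.mem_univ _) Finset.univ_nonempty
    (by simp [mul_div_cancel₀ _ hn'])
  have hceil : (⌈(T.card : ℝ) / n⌉ : ℝ) ≤ ((T.filter fun j => P j = k).card : ℝ) := by
    rw [← Int.cast_natCast (T.filter fun j => P j = k).card, Int.cast_le]
    exact Int.ceil_le.2 (by rwa [Int.cast_natCast])
  calc (⌈(T.card : ℝ) / n⌉ : ℝ) * t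
      ≤ ((T.filter fun j => P j = k).card : ℝ) * t := by gcongr
    _ ≤ ∑ j ∈ T.filter (fun j => P j = k), c j := by
      rw [← nsmul_eq_mul]
      exact Finset.card_nsmul_le_sum _ _ _ fun j hj => hT j (Finset.mem_filter.1 hj).1
    _ ≤ ∑ j ∈ Finset.univ.filter (fun j => P j = k), c j :=
      Finset.sum_le_sum_of_subset_of_nonneg
        (Finset.filter_subset_filter _ (Finset.subset_univ _)) fun j _ _ => hc j
    _ ≤ ⨆ k : Fin n, ∑ j ∈ Finset.univ.filter (fun j => P j = k), c j :=
      le_ciSup (f := fun k => ∑ j ∈ Finset.univ.filter (fun j => P j = k), c j)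
        (Set.finite_range _).bddAbove k

/-- if an agent picks her `a` cheapest items `S` from a pool `R`
with `s` items left over, her cost is at most `(a/⌈s/n⌉)` times her maxmin share. -/
theorem pick_cheapest_cost_bound (n m : ℕ) (hn : 0 < n)
    (c : Fin m → ℝ) (hc : ∀ j, 0 ≤ c j)
    (R S : Finset (Fin m)) (a s : ℕ) (ha : 1 ≤ a) (hs : 1 ≤ s)
    (hRcard : R.card = a + s) (hSR : S ⊆ R) (hScard : S.card = a)
    (hcheap : ∀ j ∈ S, ∀ j' ∈ R \ S, c j ≤ c j') :
    ∑ j ∈ S, c j ≤ ((a : ℝ) / (⌈(s : ℝ) / (n : ℝ)⌉ : ℝ)) * MMS n m c := by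
  obtain ⟨j₀, hj₀, hmax⟩ := S.exists_max_image c (Finset.card_pos.1 (by omega))
  have hT : (R \ S).card = s := by
    rw [Finset.card_sdiff_of_subset hSR]
    omega
  have hMMS := ceil_card_div_mul_le_MMS hn hc (hc j₀) (hcheap j₀ hj₀)
  rw [hT] at hMMS
  have hpos : (0 : ℝ) < (⌈(s : ℝ) / (n : ℝ)⌉ : ℝ) := by
    exact_mod_cast Int.ceil_pos.2 (by positivity)
  calc ∑ j ∈ S, c j ≤ (a : ℝ) * c j₀ := by
        rw [← hScard, ← nsmul_eq_mul]
        exact Finset.sum_le_card_nsmul _ _ _ hmax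
    _ ≤ (a : ℝ) * (MMS n m c / (⌈(s : ℝ) / (n : ℝ)⌉ : ℝ)) := by
        gcongr
        rwa [le_div_iff₀ hpos, mul_comm]
    _ = ((a : ℝ) / (⌈(s : ℝ) / (n : ℝ)⌉ : ℝ)) * MMS n m c := by ring
end

section
/- There exists a universal constant C such that for all integers n ≥ 2 and m > n there is a deterministic algorithm A mapping cost profiles to allocations which is (i) ordinal: if two profiles induce, for every agent, the same weak order of the items by cost, then A outputs the same allocation; (ii) strategyproof: for every agent i, profile c, and report c'_i, c_i(A(c)_i) ≤ c_i(A(c'_i, c_{−i})_i); and (iii) C·(1 + log₂(m/n))-approximately MMS fair: for every profile, every agent i receives a bundle X_i with c_i(X_i) ≤ C·(1 + log₂(m/n))·MMS_i. -/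
open Finset

section MaxminShare

variable {n m : ℕ} {c : Fin m → ℝ}

lemma le_MMS_of_forall_partition [NeZero n] {b : ℝ}
    (h : ∀ P : Fin m → Fin n, ∃ k, b ≤ ∑ j ∈ univ.filter (fun j => P j = k), c j) :
    b ≤ MMS n m c := by
  refine le_ciInf fun P => ?_
  obtain ⟨k, hk⟩ := h P
  exact hk.trans (le_ciSup (f := fun k => ∑ j ∈ univ.filter (fun j => P j = k), c j)
    (Set.finite_range _).bddAbove k)

lemma cost_le_MMS [NeZero n] (hc : ∀ j, 0 ≤ c j) (j : Fin m) : c j ≤ MMS n m c :=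
  le_MMS_of_forall_partition fun P =>
    ⟨P j, single_le_sum (f := c) (fun i _ => hc i) (by simp)⟩

lemma sum_cost_le_mul_MMS [NeZero n] : ∑ j, c j ≤ n * MMS n m c := by
  have hn : (0 : ℝ) < n := by exact_mod_cast NeZero.pos n
  rw [← div_le_iff₀' hn]
  refine le_MMS_of_forall_partition fun P => ?_
  by_contra! h
  have key : ∑ k : Fin n, ∑ j ∈ univ.filter (fun j => P j = k), c j
      < ∑ _k : Fin n, (∑ j, c j) / n :=
    sum_lt_sum_of_nonempty univ_nonempty fun k _ => h k
  rw [sum_fiberwise, sum_const, card_univ, Fintype.card_fin, nsmul_eq_mul,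
    mul_div_cancel₀ _ hn.ne'] at key
  exact lt_irrefl _ key

end MaxminShare

section Selection

variable {α : Type*} [DecidableEq α]

/-- `K` consists of `r` elements of `S` that are highest with respect to `rel`. -/
def IsTopSubset (rel : α → α → Prop) (S : Finset α) (r : ℕ) (K : Finset α) : Prop :=
  K ⊆ S ∧ K.card = r ∧ ∀ x ∈ K, ∀ y ∈ S \ K, rel y x

lemma exists_isTopSubset (c : α → ℝ) (S : Finset α) (r : ℕ) (hr : r ≤ S.card) :
    ∃ K, IsTopSubset (fun x y => c x ≤ c y) S r K := by
  induction r with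
  | zero => exact ⟨∅, by simp [IsTopSubset]⟩
  | succ r ih =>
    obtain ⟨K, hKS, hcard, htop⟩ := ih (by omega)
    have hne : (S \ K).Nonempty := by
      rw [← card_pos, card_sdiff_of_subset hKS]
      omega
    obtain ⟨a, ha, hmax⟩ := exists_max_image (S \ K) c hne
    obtain ⟨haS, haK⟩ := mem_sdiff.1 ha
    refine ⟨insert a K, insert_subset haS hKS, by rw [card_insert_of_notMem haK, hcard], ?_⟩
    intro x hx y hy
    have hyK : y ∈ S \ K := by
      simp only [mem_sdiff, mem_insert, not_or] at hy ⊢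
      exact ⟨hy.1, hy.2.2⟩
    rcases mem_insert.1 hx with rfl | hx
    · exact hmax y hyK
    · exact htop x hx y hyK

open Classical in
/-- A choice of `r` highest elements of `S` with respect to `rel`, if there is one. -/
noncomputable def topSubset (rel : α → α → Prop) (S : Finset α) (r : ℕ) : Finset α :=
  if h : ∃ K, IsTopSubset rel S r K then h.choose else ∅

lemma isTopSubset_topSubset (c : α → ℝ) {S : Finset α} {r : ℕ} (hr : r ≤ S.card) :
    IsTopSubset (fun x y => c x ≤ c y) S r (topSubset (fun x y => c x ≤ c y) S r) := by
  have h := exists_isTopSubset c S r hr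
  rw [topSubset, dif_pos h]
  exact h.choose_spec

lemma card_mul_sum_le_card_mul_sum {α : Type*} {c : α → ℝ} {A B : Finset α}
    (h : ∀ x ∈ A, ∀ y ∈ B, c x ≤ c y) :
    (B.card : ℝ) * ∑ x ∈ A, c x ≤ A.card * ∑ y ∈ B, c y := by
  calc (B.card : ℝ) * ∑ x ∈ A, c x = ∑ x ∈ A, ∑ _y ∈ B, c x := by simp [mul_sum]
    _ ≤ ∑ _x ∈ A, ∑ y ∈ B, c y := sum_le_sum fun x hx => sum_le_sum fun y hy => h x hx y hy
    _ = A.card * ∑ y ∈ B, c y := by simp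

lemma IsTopSubset.sum_sdiff_le {c : α → ℝ} {S K K' : Finset α} {r : ℕ}
    (hK : IsTopSubset (fun x y => c x ≤ c y) S r K) (hsub : K' ⊆ S) (hcard : K'.card = r) :
    ∑ x ∈ S \ K, c x ≤ ∑ x ∈ S \ K', c x := by
  obtain ⟨hKS, hKr, htop⟩ := hK
  have h1 := card_mul_sum_le_card_mul_sum (c := c) (A := K' \ K) (B := K \ K') fun x hx y hy =>
    htop y (mem_sdiff.1 hy).1 x (mem_sdiff.2 ⟨hsub (mem_sdiff.1 hx).1, (mem_sdiff.1 hx).2⟩)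
  have hc : (K' \ K).card = (K \ K').card := card_sdiff_comm (hcard.trans hKr.symm)
  have h2 : ∑ x ∈ K' \ K, c x ≤ ∑ x ∈ K \ K', c x := by
    rcases Nat.eq_zero_or_pos (K \ K').card with h0 | hpos
    · rw [card_eq_zero.1 h0, card_eq_zero.1 (hc.trans h0)]
    · rw [hc] at h1
      exact le_of_mul_le_mul_left h1 (by exact_mod_cast hpos)
  have e1 := sum_sdiff (f := c) hKS
  have e2 := sum_sdiff (f := c) hsub
  have e3 := sum_sdiff_sub_sum_sdiff (s₁ := K) (s₂ := K') (f := c)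
  linarith

lemma IsTopSubset.card_mul_sum_sdiff_le {c : α → ℝ} {S K : Finset α} {r : ℕ}
    (hK : IsTopSubset (fun x y => c x ≤ c y) S r K) :
    (S.card : ℝ) * ∑ x ∈ S \ K, c x ≤ (S.card - r) * ∑ x ∈ S, c x := by
  obtain ⟨hKS, hKr, htop⟩ := hK
  have h := card_mul_sum_le_card_mul_sum (c := c) (A := S \ K) (B := K) fun x hx y hy =>
    htop y hy x hx
  rw [card_sdiff_of_subset hKS, Nat.cast_sub (card_le_card hKS), hKr] at h
  have e := sum_sdiff (f := c) hKS
  rw [← e]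
  linarith

lemma IsTopSubset.sum_sdiff_le_card_mul {c : α → ℝ} {S K : Finset α} {r : ℕ} {b : ℝ}
    (hK : IsTopSubset (fun x y => c x ≤ c y) S r K) (hb : ∀ x, c x ≤ b) :
    ∑ x ∈ S \ K, c x ≤ (S.card - r) * b := by
  obtain ⟨hKS, hKr, -⟩ := hK
  have h := sum_le_card_nsmul (S \ K) c b fun x _ => hb x
  rwa [nsmul_eq_mul, card_sdiff_of_subset hKS, Nat.cast_sub (card_le_card hKS), hKr] at h

end Selection

section SequentialPicking

variable {m : ℕ}

/-- The items left after the first `t` agents have picked, where agent `t` leaves the `r (t + 1)`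
items it finds most costly. -/
noncomputable def remaining (r : ℕ → ℕ) (rel : ℕ → Fin m → Fin m → Prop) : ℕ → Finset (Fin m)
  | 0 => univ
  | t + 1 => topSubset (rel t) (remaining r rel t) (r (t + 1))

lemma remaining_congr {r : ℕ → ℕ} {rel rel' : ℕ → Fin m → Fin m → Prop} {t : ℕ}
    (h : ∀ s < t, rel s = rel' s) : remaining r rel t = remaining r rel' t := by
  induction t with
  | zero => rfl
  | succ t ih =>
    rw [remaining, remaining, ih fun s hs => h s (hs.trans t.lt_succ_self), h t t.lt_succ_self]

/-- The order relation of the agents' costs, trivial at indices that are not agents. -/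
def costRel {n : ℕ} (c : Fin n → Fin m → ℝ) (t : ℕ) (x y : Fin m) : Prop :=
  ∀ h : t < n, c ⟨t, h⟩ x ≤ c ⟨t, h⟩ y

lemma costRel_val {n : ℕ} (c : Fin n → Fin m → ℝ) (i : Fin n) :
    costRel c i = fun x y => c i x ≤ c i y := by
  funext x y
  simp [costRel]

lemma card_remaining {r : ℕ → ℕ} (hr0 : r 0 = m) (hr : Antitone r)
    {n : ℕ} (c : Fin n → Fin m → ℝ) {t : ℕ} (ht : t ≤ n) :
    (remaining r (costRel c) t).card = r t := by
  induction t with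
  | zero => simp [remaining, hr0]
  | succ t ih =>
    have hrel := costRel_val c ⟨t, ht⟩
    rw [remaining, hrel]
    refine (isTopSubset_topSubset _ ?_).2.1
    rw [ih (by omega)]
    exact hr t.le_succ

lemma isTopSubset_remaining {r : ℕ → ℕ} (hr0 : r 0 = m) (hr : Antitone r)
    {n : ℕ} (c : Fin n → Fin m → ℝ) (i : Fin n) :
    IsTopSubset (fun x y => c i x ≤ c i y) (remaining r (costRel c) i) (r (i + 1))
      (remaining r (costRel c) (i + 1)) := by
  rw [remaining, costRel_val]
  refine isTopSubset_topSubset _ ?_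
  rw [card_remaining hr0 hr c i.2.le]
  exact hr (Nat.le_succ _)

lemma remaining_subset {r : ℕ → ℕ} (hr0 : r 0 = m) (hr : Antitone r)
    {n : ℕ} (c : Fin n → Fin m → ℝ) {s t : ℕ} (hst : s ≤ t) (ht : t ≤ n) :
    remaining r (costRel c) t ⊆ remaining r (costRel c) s := by
  induction t, hst using Nat.le_induction with
  | base => exact Subset.rfl
  | succ t _ ih =>
    exact (isTopSubset_remaining hr0 hr c ⟨t, ht⟩).1.trans (ih (by omega))

open Classical in
/-- The allocation in which agent `i` takes what it removes from the remaining items. -/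
noncomputable def pickingAllocation {n : ℕ} [NeZero n] (r : ℕ → ℕ)
    (rel : ℕ → Fin m → Fin m → Prop) (j : Fin m) : Fin n :=
  if h : ∃ i : Fin n, j ∈ remaining r rel i \ remaining r rel (i + 1) then h.choose else 0

lemma filter_pickingAllocation {r : ℕ → ℕ} (hr0 : r 0 = m) (hr : Antitone r)
    {n : ℕ} [NeZero n] (hrn : r n = 0) (c : Fin n → Fin m → ℝ)
    (i : Fin n) :
    univ.filter (fun j => pickingAllocation r (costRel c) j = i) =
      remaining r (costRel c) i \ remaining r (costRel c) (i + 1) := by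
  have uniq : ∀ (i k : Fin n) (j : Fin m),
      j ∈ remaining r (costRel c) i \ remaining r (costRel c) (i + 1) →
      j ∈ remaining r (costRel c) k \ remaining r (costRel c) (k + 1) → k ≤ i := by
    intro i k j hi hk
    by_contra! hlt
    exact (mem_sdiff.1 hi).2 (remaining_subset hr0 hr c (s := i + 1) hlt k.2.le (mem_sdiff.1 hk).1)
  ext j
  have hex : ∃ k : Fin n, j ∈ remaining r (costRel c) k \ remaining r (costRel c) (k + 1) := by
    by_contra! h
    have hmem : ∀ t ≤ n, j ∈ remaining r (costRel c) t := by
      intro t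
      induction t with
      | zero => simp [remaining]
      | succ t ih =>
        intro ht
        by_contra hj
        exact h ⟨t, ht⟩ (mem_sdiff.2 ⟨ih (by omega), hj⟩)
    have hcard := card_remaining hr0 hr c le_rfl
    rw [hrn, card_eq_zero] at hcard
    simpa [hcard] using hmem n le_rfl
  have heq : pickingAllocation r (costRel c) j = hex.choose := dif_pos hex
  rw [mem_filter, heq]
  constructor
  · rintro ⟨-, rfl⟩
    exact hex.choose_spec
  · intro hj
    exact ⟨mem_univ _, le_antisymm (uniq _ _ j hj hex.choose_spec) (uniq _ _ j hex.choose_spec hj)⟩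

end SequentialPicking

/-- A picking schedule in which the share `r t - r (t + 1)` of agent `t` is at most
`L * (2 + r t / n)`. -/
lemma exists_schedule {n m : ℕ} (hn : 0 < n) (hnm : n < m) :
    ∃ r : ℕ → ℕ, r 0 = m ∧ r n = 0 ∧ Antitone r ∧ ∀ t,
      ((r t : ℝ) - r (t + 1)) * n ≤
        (1 + Real.logb 2 ((m : ℝ) / (n : ℝ))) * (2 * n + r t) := by
  have hn0 : (0 : ℝ) < n := by exact_mod_cast hn
  have hnm' : (n : ℝ) < m := by exact_mod_cast hnm
  set L := 1 + Real.logb 2 ((m : ℝ) / (n : ℝ)) with hL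
  have hL1 : 1 ≤ L := by
    have : 0 ≤ Real.logb 2 ((m : ℝ) / (n : ℝ)) :=
      Real.logb_nonneg (by norm_num) (by rw [le_div_iff₀ hn0]; linarith)
    linarith
  have hpow : (2 : ℝ) ^ L = 2 * (m / n) := by
    rw [hL, Real.rpow_add (by norm_num), Real.rpow_one,
      Real.rpow_logb (by norm_num) (by norm_num) (div_pos (hn0.trans hnm') hn0)]
  set g : ℕ → ℝ := fun t => n * (2 : ℝ) ^ (L * (1 - t / n)) with hg
  have hganti : Antitone g := by
    intro s t hst
    have : (s : ℝ) ≤ t := by exact_mod_cast hst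
    simp only [hg]
    gcongr
    norm_num
  have hstep : ∀ t, g t * (1 - L / n) ≤ g (t + 1) := by
    intro t
    have e : g (t + 1) = g t * (2 : ℝ) ^ (-(L / n)) := by
      simp only [hg]
      rw [mul_assoc, ← Real.rpow_add (by norm_num)]
      congr 2
      push_cast
      ring
    rw [e]
    refine mul_le_mul_of_nonneg_left ?_ (by simp only [hg]; positivity)
    rw [Real.rpow_def_of_pos (by norm_num)]
    have h1 := Real.add_one_le_exp (Real.log 2 * -(L / n))
    have h2 : Real.log 2 ≤ 1 := by linarith [Real.log_two_lt_d9]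
    have h3 : 0 ≤ L / n := by positivity
    nlinarith
  refine ⟨fun t => min m ⌈g t - n⌉₊, ?_, ?_, ?_, ?_⟩
  · refine min_eq_left ?_
    have : (m : ℝ) ≤ ⌈g 0 - n⌉₊ := by
      refine le_trans ?_ (Nat.le_ceil _)
      have : g 0 = 2 * m := by
        simp only [hg, Nat.cast_zero, zero_div, sub_zero, mul_one, hpow]
        field_simp
      linarith
    exact_mod_cast this
  · have : g n - n = 0 := by simp [hg, hn0.ne']
    simp [this]
  · intro s t hst
    exact min_le_min_left _ (Nat.ceil_mono (by linarith [hganti hst]))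
  · intro t
    dsimp only
    set R := min m ⌈g t - n⌉₊ with hR
    have hRnn : (0 : ℝ) ≤ R := Nat.cast_nonneg _
    rcases le_total m ⌈g (t + 1) - n⌉₊ with h | h
    · rw [min_eq_left h]
      have : (R : ℝ) ≤ m := by exact_mod_cast min_le_left _ _
      have h0 : ((R : ℝ) - m) * n ≤ 0 := mul_nonpos_of_nonpos_of_nonneg (by linarith) hn0.le
      exact h0.trans (by positivity)
    · rw [min_eq_right h]
      have hb : g (t + 1) - n ≤ ⌈g (t + 1) - n⌉₊ := Nat.le_ceil _
      have hb0 : (0 : ℝ) ≤ ⌈g (t + 1) - n⌉₊ := Nat.cast_nonneg _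
      rcases le_total (n : ℝ) L with hLn | hLn
      · nlinarith
      · rcases Nat.eq_zero_or_pos R with hR0 | hRpos
        · rw [hR0]
          push_cast
          have : (0 - (⌈g (t + 1) - n⌉₊ : ℝ)) * n ≤ 0 :=
            mul_nonpos_of_nonpos_of_nonneg (by linarith) hn0.le
          exact this.trans (by positivity)
        · have hlt : (R : ℝ) < g t - n + 1 := by
            have hle : (R : ℝ) ≤ ⌈g t - n⌉₊ := by exact_mod_cast min_le_right _ _
            refine hle.trans_lt (Nat.ceil_lt_add_one ?_)
            by_contra! hneg
            rw [hR, Nat.ceil_eq_zero.2 hneg.le] at hRpos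
            simp at hRpos
          have hs := hstep t
          have hs' : g t * (n - L) ≤ g (t + 1) * n := by
            have := mul_le_mul_of_nonneg_right hs hn0.le
            have e : g t * (1 - L / n) * n = g t * (n - L) := by field_simp
            linarith
          have h1 : (R + n - 1) * (n - L) ≤ g t * (n - L) :=
            mul_le_mul_of_nonneg_right (by linarith) (by linarith)
          have h2 : (g (t + 1) - n) * n ≤ ⌈g (t + 1) - n⌉₊ * n :=
            mul_le_mul_of_nonneg_right hb hn0.le
          nlinarith

/-- The cost bound for a bundle of the `a` cheapest among `R` items, when `a` is small. -/
lemma bundle_cost_le {n a R L T S M : ℝ} (hn : 0 < n) (ha : 0 ≤ a) (hM : 0 ≤ M)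
    (hR : 0 ≤ R)
    (hshare : a * n ≤ L * (2 * n + R)) (hmax : T ≤ a * M) (havg : R * T ≤ a * S)
    (htot : S ≤ n * M) : T ≤ 3 * L * M := by
  have h1 : (2 * n + R) * T ≤ a * (3 * n * M) := by
    have := mul_le_mul_of_nonneg_left hmax hn.le
    have := mul_le_mul_of_nonneg_left htot ha
    nlinarith
  have h2 : a * n * (3 * M) ≤ L * (2 * n + R) * (3 * M) :=
    mul_le_mul_of_nonneg_right hshare (by positivity)
  refine le_of_mul_le_mul_left (a := 2 * n + R) ?_ (by positivity)
  linarith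


/-- there is a universal constant `C` such that for all `n ≥ 2` and
`m > n` there is a deterministic allocation algorithm (mapping nonnegative cost
profiles to allocations `Fin m → Fin n`) that is ordinal, strategyproof, and
`C·(1 + log₂(m/n))`-approximately MMS fair. -/
theorem det_ordinal_sp_log_approx :
    ∃ C : ℝ, 0 < C ∧
      ∀ n m : ℕ, 2 ≤ n → n < m →
        ∃ A : (Fin n → Fin m → ℝ) → (Fin m → Fin n),
          -- (i) ordinal: the output depends only on each agent's weak order by cost
          (∀ c c' : Fin n → Fin m → ℝ,
            (∀ (i : Fin n) (j j' : Fin m), c i j ≤ c i j' ↔ c' i j ≤ c' i j') →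
            A c = A c') ∧
          -- (ii) strategyproof
          (∀ c : Fin n → Fin m → ℝ, (∀ i j, 0 ≤ c i j) →
            ∀ (i : Fin n) (c'i : Fin m → ℝ), (∀ j, 0 ≤ c'i j) →
            ∑ j ∈ Finset.univ.filter (fun j => A c j = i), c i j ≤
              ∑ j ∈ Finset.univ.filter
                  (fun j => A (Function.update c i c'i) j = i), c i j) ∧
          -- (iii) C·(1 + log₂(m/n))-approximate MMS fairness
          (∀ c : Fin n → Fin m → ℝ, (∀ i j, 0 ≤ c i j) →
            ∀ i : Fin n,
              ∑ j ∈ Finset.univ.filter (fun j => A c j = i), c i j ≤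
                C * (1 + Real.logb 2 ((m : ℝ) / (n : ℝ))) * MMS n m (c i)) := by
  refine ⟨3, by norm_num, fun n m hn hnm => ?_⟩
  have : NeZero n := ⟨by omega⟩
  obtain ⟨r, hr0, hrn, hr, hshare⟩ := exists_schedule (by omega : 0 < n) hnm
  refine ⟨fun c => pickingAllocation r (costRel c), ?_, ?_, ?_⟩
  · intro c c' h
    have : costRel c = costRel c' := by
      funext t x y
      simp only [costRel, h]
    simp only [this]
  · intro c _ i c'i _
    rw [filter_pickingAllocation hr0 hr hrn, filter_pickingAllocation hr0 hr hrn]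
    have hrem : remaining r (costRel (Function.update c i c'i)) i = remaining r (costRel c) i := by
      refine remaining_congr fun s hs => ?_
      have hne : (⟨s, hs.trans i.2⟩ : Fin n) ≠ i := fun h => hs.ne (congrArg Fin.val h)
      funext x y
      simp [costRel, Function.update_of_ne hne]
    have h' := isTopSubset_remaining hr0 hr (Function.update c i c'i) i
    rw [hrem] at h' ⊢
    exact (isTopSubset_remaining hr0 hr c i).sum_sdiff_le h'.1 h'.2.1
  · intro c hc i
    rw [filter_pickingAllocation hr0 hr hrn]
    have htop := isTopSubset_remaining hr0 hr c i
    have hcard := card_remaining hr0 hr c i.2.le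
    have hmax := htop.sum_sdiff_le_card_mul (cost_le_MMS (n := n) (hc i))
    have havg := htop.card_mul_sum_sdiff_le
    rw [hcard] at hmax havg
    have hn0 : (0 : ℝ) < n := by exact_mod_cast NeZero.pos n
    have hle : (r (i + 1) : ℝ) ≤ r i := by exact_mod_cast hr (Nat.le_succ _)
    exact bundle_cost_le hn0 (by linarith)
      ((hc i ⟨0, by omega⟩).trans (cost_le_MMS (hc i) _)) (Nat.cast_nonneg _)
      (hshare i) hmax havg
      ((sum_le_sum_of_subset_of_nonneg (subset_univ _) fun j _ _ => hc i j).trans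
        sum_cost_le_mul_MMS)
end

section
/- Limits of sequential picking: let m > n ≥ 2 be integers with log₂(m/n) ≤ 2n and set K = (1/4)·log₂(m/n). Then for every sequence of nonnegative integers a_1,…,a_n with ∑_{i=1}^n a_i = m there exists an index i such that a_i ≥ K·⌈(a_1+…+a_i)/n⌉. -/
/-- If each increment of the partial sums of `a`, shifted by `c`, grows them by a factor of at most
`r`, then the total shifted by `c` is at most `r ^ n * c`. -/
lemma sum_add_le_pow_mul {n : ℕ} (a : Fin n → ℝ) {c r : ℝ} (hr : 0 ≤ r)
    (h : ∀ i, ∑ j with j ≤ i, a j + c ≤ r * (∑ j with j < i, a j + c)) :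
    ∑ i, a i + c ≤ r ^ n * c := by
  have key : ∀ k ≤ n, ∑ j : Fin n with j.val < k, a j + c ≤ r ^ k * c := by
    intro k
    induction k with
    | zero => simp
    | succ k ih =>
      intro hk
      have hstep := h ⟨k, hk⟩
      simp only [Fin.le_def, Fin.lt_def] at hstep
      simp only [Nat.lt_succ_iff, pow_succ']
      calc _ ≤ _ := hstep
        _ ≤ r * (r ^ k * c) := mul_le_mul_of_nonneg_left (ih (by omega)) hr
        _ = _ := by ring
  simpa using key n le_rfl

/-- The chord bound for the convex function `2 ^ (-t)` on `[0, 1]`, multiplied by `2 ^ t`. -/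
lemma one_le_two_rpow_mul_one_sub_half {t : ℝ} (h0 : 0 ≤ t) (h1 : t ≤ 1) :
    1 ≤ (2 : ℝ) ^ t * (1 - t / 2) := by
  have h := rpow_one_add_le_one_add_mul_self (s := -1 / 2) (by norm_num) h0 h1
  have hprod : (2 : ℝ) ^ t * (1 + -1 / 2) ^ t = 1 := by
    rw [← Real.mul_rpow (by norm_num) (by norm_num)]
    norm_num
  calc (1 : ℝ) = 2 ^ t * (1 + -1 / 2) ^ t := hprod.symm
    _ ≤ 2 ^ t * (1 + t * (-1 / 2)) := mul_le_mul_of_nonneg_left h (by positivity)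
    _ = _ := by ring

/-- limits of sequential picking.  Let `m > n ≥ 2` with
`log₂(m/n) ≤ 2n` and `K = (1/4)·log₂(m/n)`.  Then for every sequence of
nonnegative integer quotas summing to `m` there is an index `i` with
`a i ≥ K·⌈(a 0 + … + a i)/n⌉`. -/
theorem seqPick_limit (n m : ℕ) (hn : 2 ≤ n) (hm : n < m)
    (hlog : Real.logb 2 ((m : ℝ) / (n : ℝ)) ≤ 2 * (n : ℝ))
    (a : Fin n → ℕ) (hsum : ∑ i, a i = m) :
    ∃ i : Fin n,
      (1 / 4 : ℝ) * Real.logb 2 ((m : ℝ) / (n : ℝ)) *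
          (⌈(∑ j ∈ Finset.univ.filter (fun j => j ≤ i), a j : ℝ) / (n : ℝ)⌉ : ℝ) ≤
        (a i : ℝ) := by
  by_contra! hlt
  have hn0 : (0 : ℝ) < n := by positivity
  have hm0 : (n : ℝ) < m := by exact_mod_cast hm
  have hq : 1 < (m : ℝ) / n := (one_lt_div hn0).2 hm0
  set L := Real.logb 2 ((m : ℝ) / n)
  have hL0 : 0 < L := Real.logb_pos (by norm_num) hq
  have hbern := one_le_two_rpow_mul_one_sub_half (t := L / (2 * n)) (by positivity)
    ((div_le_one (by positivity)).2 hlog)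
  have hgrow := sum_add_le_pow_mul (fun i => (a i : ℝ)) (c := n) (r := 2 ^ (L / (2 * n)))
    (by positivity) (fun i => by
      have hsplit : ∑ j with j ≤ i, (a j : ℝ) = a i + ∑ j with j < i, (a j : ℝ) := by
        rw [← Finset.sum_insert (f := fun j => (a j : ℝ)) (by simp)]
        congr 1
        ext j
        simp [le_iff_eq_or_lt]
      have hi := hlt i
      set S := ∑ j with j ≤ i, (a j : ℝ)
      have hS0 : 0 ≤ S := by positivity
      have hai : (a i : ℝ) ≤ L / (2 * n) / 2 * (S + n) :=
        calc (a i : ℝ) ≤ 1 / 4 * L * ⌈S / n⌉ := hi.le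
          _ ≤ 1 / 4 * L * (S / n + 1) :=
            mul_le_mul_of_nonneg_left (Int.ceil_lt_add_one _).le (by positivity)
          _ = _ := by field_simp; ring
      calc S + n ≤ 2 ^ (L / (2 * n)) * (1 - L / (2 * n) / 2) * (S + n) :=
            le_mul_of_one_le_left (by positivity) hbern
        _ = 2 ^ (L / (2 * n)) * (S + n - L / (2 * n) / 2 * (S + n)) := by ring
        _ ≤ _ := mul_le_mul_of_nonneg_left (by linarith) (by positivity))
  have hsum' : ∑ i, (a i : ℝ) = m := by exact_mod_cast hsum
  have hpow : ((2 : ℝ) ^ (L / (2 * n))) ^ n ≤ m / n :=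
    calc ((2 : ℝ) ^ (L / (2 * n))) ^ n = 2 ^ (L / 2) := by
          rw [← Real.rpow_mul_natCast (by norm_num)]
          congr 1
          field_simp
      _ ≤ 2 ^ L := Real.rpow_le_rpow_of_exponent_le (by norm_num) (by linarith)
      _ = m / n := Real.rpow_logb (by norm_num) (by norm_num) (by positivity)
  have hle := mul_le_mul_of_nonneg_right hpow hn0.le
  rw [div_mul_cancel₀ _ hn0.ne'] at hle
  linarith
end

section
/- No randomized ordinal allocation algorithm for 2 agents and 4 chores has expected approximation ratio smaller than 6/5: for every function A mapping pairs of rankings of the 4 items to probability distributions over allocations, there exist a profile of rankings R = (R_1, R_2) and cost vectors c_1, c_2 consistent with R_1 and R_2 respectively such that E_{x ∼ A(R)}[max_{i∈{1,2}} c_i(x_i)/MMS_i] ≥ 6/5. -/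
/-- The total weight of the items that the allocation `x` gives to agent `k`. -/
def bundleLoad (w : Fin 4 → ℕ) (x : Fin 4 → Fin 2) (k : Fin 2) : ℕ :=
  ∑ j ∈ Finset.univ.filter (fun j => x j = k), w j

/-- The larger of the two bundle weights of the allocation `x`. -/
def makespan (w : Fin 4 → ℕ) (x : Fin 4 → Fin 2) : ℕ :=
  max (bundleLoad w x 0) (bundleLoad w x 1)

theorem sum_filter_natCast_eq_bundleLoad (w : Fin 4 → ℕ) (x : Fin 4 → Fin 2) (k : Fin 2) :
    ∑ j ∈ Finset.univ.filter (fun j => x j = k), (w j : ℝ) = bundleLoad w x k := by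
  simp [bundleLoad]

theorem MMS_natCast_eq (w : Fin 4 → ℕ) (v : ℕ) (hlower : ∀ x, v ≤ makespan w x)
    (hattained : ∃ x, makespan w x = v) : MMS 2 4 (fun j => (w j : ℝ)) = v := by
  have hsup : ∀ P : Fin 4 → Fin 2,
      (⨆ k : Fin 2, ∑ j ∈ Finset.univ.filter (fun j => P j = k), (w j : ℝ)) = makespan w P := by
    intro P
    simp_rw [sum_filter_natCast_eq_bundleLoad]
    rw [makespan, Nat.cast_max]
    refine le_antisymm (ciSup_le fun k => ?_) (max_le ?_ ?_)
    · fin_cases k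
      · exact le_max_left _ _
      · exact le_max_right _ _
    · exact le_ciSup (f := fun k => (bundleLoad w P k : ℝ)) (Set.finite_range _).bddAbove 0
    · exact le_ciSup (f := fun k => (bundleLoad w P k : ℝ)) (Set.finite_range _).bddAbove 1
  obtain ⟨x, hx⟩ := hattained
  simp_rw [MMS, hsup]
  refine le_antisymm ?_ (le_ciInf fun P => by exact_mod_cast hlower P)
  rw [← hx]
  exact ciInf_le (f := fun P => (makespan w P : ℝ)) (Set.finite_range _).bddBelow x

theorem max_ratio_eq_makespan_div (w : Fin 4 → ℕ) (v : ℕ)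
    (hMMS : MMS 2 4 (fun j => (w j : ℝ)) = v) (x : Fin 4 → Fin 2) :
    max ((∑ j ∈ Finset.univ.filter (fun j => x j = 0), (w j : ℝ)) /
          MMS 2 4 (fun j => (w j : ℝ)))
        ((∑ j ∈ Finset.univ.filter (fun j => x j = 1), (w j : ℝ)) /
          MMS 2 4 (fun j => (w j : ℝ))) = (makespan w x : ℝ) / v := by
  rw [hMMS, sum_filter_natCast_eq_bundleLoad, sum_filter_natCast_eq_bundleLoad, makespan,
    Nat.cast_max, max_div_div_right (Nat.cast_nonneg v)]

theorem MMS_one_large_chore : MMS 2 4 (fun j => ((![3, 1, 1, 1] j : ℕ) : ℝ)) = (3 : ℕ) :=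
  MMS_natCast_eq _ 3 (by decide) ⟨![0, 1, 1, 1], by decide⟩

theorem MMS_equal_chores : MMS 2 4 (fun j => ((![1, 1, 1, 1] j : ℕ) : ℝ)) = (2 : ℕ) :=
  MMS_natCast_eq _ 2 (by decide) ⟨![0, 0, 1, 1], by decide⟩

/-- No single allocation is balanced both for one large chore and for equal chores. -/
theorem six_le_makespan_add_makespan :
    ∀ x, 6 ≤ makespan ![3, 1, 1, 1] x + makespan ![1, 1, 1, 1] x := by
  decide

theorem expected_makespan_lower_bound (p : (Fin 4 → Fin 2) → ℝ) (hp : ∀ x, 0 ≤ p x)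
    (hsum : ∑ x, p x = 1) :
    (6 / 5 : ℝ) ≤ ∑ x, p x * ((makespan ![3, 1, 1, 1] x : ℝ) / (3 : ℕ)) ∨
      (6 / 5 : ℝ) ≤ ∑ x, p x * ((makespan ![1, 1, 1, 1] x : ℝ) / (2 : ℕ)) := by
  have hmix : (6 / 5 : ℝ) ≤
      3 / 5 * ∑ x, p x * ((makespan ![3, 1, 1, 1] x : ℝ) / (3 : ℕ)) +
        2 / 5 * ∑ x, p x * ((makespan ![1, 1, 1, 1] x : ℝ) / (2 : ℕ)) := by
    calc (6 / 5 : ℝ) = ∑ x, p x * (6 / 5) := by rw [← Finset.sum_mul, hsum, one_mul]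
      _ ≤ ∑ x, (3 / 5 * (p x * ((makespan ![3, 1, 1, 1] x : ℝ) / (3 : ℕ))) +
            2 / 5 * (p x * ((makespan ![1, 1, 1, 1] x : ℝ) / (2 : ℕ)))) := by
          refine Finset.sum_le_sum fun x _ => ?_
          have h : (6 : ℝ) ≤ makespan ![3, 1, 1, 1] x + makespan ![1, 1, 1, 1] x := by
            exact_mod_cast six_le_makespan_add_makespan x
          push_cast
          linarith [mul_le_mul_of_nonneg_left h (hp x)]
      _ = _ := by rw [Finset.sum_add_distrib, Finset.mul_sum, Finset.mul_sum]
  by_contra! h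
  linarith [h.1, h.2]

/-- no randomized ordinal algorithm for 2 agents and 4 chores has
expected approximation ratio smaller than 6/5.  A randomized ordinal algorithm `A`
maps a profile of rankings (each an equiv `Fin 4 ≃ Fin 4`, position `k` holding
the item `R i k`, earlier positions having weakly larger cost) to a probability
distribution over allocations `Fin 4 → Fin 2`, encoded by nonnegative weights
summing to 1.  For every such `A` there are rankings `R` and consistent,
nonnegative, not-identically-zero cost vectors such that the expected value of
`max_i c_i(x_i)/MMS_i` is at least `6/5`. -/
theorem ordinal_rand_lower_bound
    (A : (Fin 2 → (Fin 4 ≃ Fin 4)) → ((Fin 4 → Fin 2) → ℝ))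
    (hdist : ∀ R, (∀ x, 0 ≤ A R x) ∧ ∑ x : Fin 4 → Fin 2, A R x = 1) :
    ∃ (R : Fin 2 → (Fin 4 ≃ Fin 4)) (c : Fin 2 → Fin 4 → ℝ),
      (∀ i j, 0 ≤ c i j) ∧
      (∀ i : Fin 2, ∃ j, c i j ≠ 0) ∧
      (∀ (i : Fin 2) (k k' : Fin 4), k ≤ k' → c i (R i k') ≤ c i (R i k)) ∧
      (6 / 5 : ℝ) ≤
        ∑ x : Fin 4 → Fin 2, A R x *
          max ((∑ j ∈ Finset.univ.filter (fun j => x j = 0), c 0 j) / MMS 2 4 (c 0))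
            ((∑ j ∈ Finset.univ.filter (fun j => x j = 1), c 1 j) / MMS 2 4 (c 1)) := by
  have consistent : ∀ w : Fin 4 → ℕ, Antitone w → ∀ k k' : Fin 4, k ≤ k' →
      ((w k' : ℕ) : ℝ) ≤ w k := fun w hw k k' h => by exact_mod_cast hw h
  obtain ⟨hnonneg, hsum⟩ := hdist fun _ => Equiv.refl _
  rcases expected_makespan_lower_bound _ hnonneg hsum with h | h
  · refine ⟨fun _ => Equiv.refl _, fun _ j => ((![3, 1, 1, 1] j : ℕ) : ℝ),
      fun _ _ => Nat.cast_nonneg _, fun _ => ⟨0, by simp⟩,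
      fun _ => consistent ![3, 1, 1, 1] (by unfold Antitone; decide), ?_⟩
    simpa only [max_ratio_eq_makespan_div _ _ MMS_one_large_chore] using h
  · refine ⟨fun _ => Equiv.refl _, fun _ j => ((![1, 1, 1, 1] j : ℕ) : ℝ),
      fun _ _ => Nat.cast_nonneg _, fun _ => ⟨0, by simp⟩,
      fun _ => consistent ![1, 1, 1, 1] (by unfold Antitone; decide), ?_⟩
    simpa only [max_ratio_eq_makespan_div _ _ MMS_equal_chores] using h
end

section
/- No deterministic strategyproof cardinal allocation algorithm for 2 agents and 4 chores has approximation ratio smaller than 4/3: for every deterministic SP algorithm A mapping cost profiles to allocations and every ε > 0, there exists a profile (c_1, c_2) of nonnegative cost vectors such that, writing x = A(c_1, c_2), some agent i satisfies c_i(x_i) > (4/3 − ε)·MMS_i. -/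
open Finset

lemma mms_le_of_partition {n m : ℕ} [NeZero n] {c : Fin m → ℝ} {K : ℝ} (P : Fin m → Fin n)
    (hP : ∀ k, ∑ j with P j = k, c j ≤ K) : MMS n m c ≤ K :=
  (ciInf_le (Set.finite_range _).bddBelow P).trans (ciSup_le hP)

lemma mms_nonneg {n m : ℕ} {c : Fin m → ℝ} (hc : ∀ j, 0 ≤ c j) : 0 ≤ MMS n m c :=
  Real.iInf_nonneg fun _ => Real.iSup_nonneg fun _ => sum_nonneg fun j _ => hc j

lemma lt_of_le_mul_mms {n m : ℕ} {c : Fin m → ℝ} {ε K t : ℝ} (hε : 0 < ε) (hK : 0 < K)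
    (hc : ∀ j, 0 ≤ c j) (hMK : MMS n m c ≤ K) (ht : t ≤ (4 / 3 - ε) * MMS n m c) :
    t < 4 / 3 * K := by
  have h0 : 0 ≤ MMS n m c := mms_nonneg hc
  rcases hMK.lt_or_eq with h | h
  · nlinarith
  · rw [h] at ht
    nlinarith

/-- The cost vector in which item `p` costs `3` and every other item costs `1`. -/
def spikedCost (p : Fin 4) : Fin 4 → ℝ := fun j => if j = p then 3 else 1

lemma spikedCost_nonneg (p j : Fin 4) : 0 ≤ spikedCost p j := by
  unfold spikedCost; split_ifs <;> norm_num

lemma sum_spikedCost {p : Fin 4} (s : Finset (Fin 4)) :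
    ∑ j ∈ s, spikedCost p j = ((#s + if p ∈ s then 2 else 0 : ℕ) : ℝ) := by
  have h (j : Fin 4) : spikedCost p j = 1 + if p = j then 2 else 0 := by
    simp only [spikedCost, eq_comm (a := j)]; split_ifs <;> norm_num
  simp [h, sum_add_distrib]

lemma sum_ones (s : Finset (Fin 4)) : ∑ j ∈ s, (1 : Fin 4 → ℝ) j = (#s : ℝ) := by simp

lemma mms_ones_le : MMS 2 4 1 ≤ 2 := by
  refine mms_le_of_partition ![0, 0, 1, 1] fun k => ?_
  rw [sum_ones]
  have : #{j : Fin 4 | (![0, 0, 1, 1] : Fin 4 → Fin 2) j = k} ≤ 2 := by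
    revert k; decide
  exact_mod_cast this

lemma mms_spikedCost_le (p : Fin 4) : MMS 2 4 (spikedCost p) ≤ 3 := by
  refine mms_le_of_partition (fun j => if j = p then 0 else 1) fun k => ?_
  rw [sum_spikedCost]
  have : #{j : Fin 4 | (if j = p then 0 else 1 : Fin 2) = k} +
      (if p ∈ ({j : Fin 4 | (if j = p then 0 else 1 : Fin 2) = k} : Finset (Fin 4))
        then 2 else 0) ≤ 3 := by
    revert p k; decide
  exact_mod_cast this

lemma card_bundle_add_card_bundle (x : Fin 4 → Fin 2) {i k : Fin 2} (hik : i ≠ k) :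
    #{j | x j = i} + #{j | x j = k} = 4 := by
  have h : ∀ j, x j = k ↔ ¬ x j = i := by intro j; omega
  simp only [h]
  simpa using card_filter_add_card_filter_not (s := (univ : Finset (Fin 4))) (fun j => x j = i)

/-- No agent can lower the cost of their bundle by misreporting. -/
def IsStrategyproof (A : (Fin 2 → Fin 4 → ℝ) → Fin 4 → Fin 2) : Prop :=
  ∀ c : Fin 2 → Fin 4 → ℝ, (∀ i j, 0 ≤ c i j) →
    ∀ (i : Fin 2) (d : Fin 4 → ℝ), (∀ j, 0 ≤ d j) →
    ∑ j with A c j = i, c i j ≤ ∑ j with A (Function.update c i d) j = i, c i j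

/-- Every agent's bundle costs less than `4 / 3` times the upper bounds `2` and `3` on the maxmin
shares of the all-ones vector and of the spiked vectors. -/
def IsFairOnSpiked (A : (Fin 2 → Fin 4 → ℝ) → Fin 4 → Fin 2) : Prop :=
  ∀ c : Fin 2 → Fin 4 → ℝ, (∀ i j, 0 ≤ c i j) → ∀ i,
    (c i = 1 → #{j | A c j = i} ≤ 2) ∧
    (∀ p, c i = spikedCost p → (#{j | A c j = i} + if A c p = i then 2 else 0) ≤ 3)

lemma isFairOnSpiked_of_le_mul_mms {A : (Fin 2 → Fin 4 → ℝ) → Fin 4 → Fin 2} {ε : ℝ} (hε : 0 < ε)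
    (hA : ∀ c : Fin 2 → Fin 4 → ℝ, (∀ i j, 0 ≤ c i j) → ∀ i,
      ∑ j with A c j = i, c i j ≤ (4 / 3 - ε) * MMS 2 4 (c i)) :
    IsFairOnSpiked A := by
  intro c hc i
  have hle := hA c hc i
  refine ⟨fun h => ?_, fun p h => ?_⟩
  · have hlt := lt_of_le_mul_mms hε two_pos (hc i) (h ▸ mms_ones_le) hle
    rw [h, sum_ones] at hlt
    have : (#{j | A c j = i} : ℝ) < (3 : ℕ) := by push_cast; linarith
    have := Nat.cast_lt.mp this
    omega
  · have hlt := lt_of_le_mul_mms hε three_pos (hc i) (h ▸ mms_spikedCost_le p) hle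
    rw [h, sum_spikedCost] at hlt
    have := Nat.cast_lt.mp (hlt.trans_eq (by norm_num : (4 / 3 * 3 : ℝ) = (4 : ℕ)))
    simp only [mem_filter, mem_univ, true_and] at this
    omega

/-- If agent `i` does not receive `p` when both agents report the all-ones vector, then agent `i`
receives exactly the item `p` when both agents report `spikedCost p`. -/
lemma bundle_of_const_spikedCost {A : (Fin 2 → Fin 4 → ℝ) → Fin 4 → Fin 2}
    (hSP : IsStrategyproof A) (hF : IsFairOnSpiked A) {i : Fin 2} {p : Fin 4}
    (hp : A (fun _ => 1) p ≠ i) :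
    A (fun _ => spikedCost p) p = i ∧ #{j | A (fun _ => spikedCost p) j = i} ≤ 1 := by
  obtain ⟨k, hik⟩ : ∃ k, i ≠ k := (exists_ne i).imp fun _ => Ne.symm
  set u : Fin 2 → Fin 4 → ℝ := fun _ => 1 with hu
  set v : Fin 2 → Fin 4 → ℝ := Function.update u i (spikedCost p) with hv
  set w : Fin 2 → Fin 4 → ℝ := fun _ => spikedCost p with hw
  have hu0 : ∀ i j, 0 ≤ u i j := fun _ _ => zero_le_one
  have hw0 : ∀ i j, 0 ≤ w i j := fun _ => spikedCost_nonneg p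
  have hvi : v i = spikedCost p := Function.update_self ..
  have hvk : v k = 1 := Function.update_of_ne hik.symm ..
  have hv0 : ∀ i j, 0 ≤ v i j := by
    intro l j
    by_cases h : l = i
    · rw [h, hvi]; exact spikedCost_nonneg p j
    · rw [hv, Function.update_of_ne h]; exact zero_le_one
  have hvu : Function.update v i 1 = u := by
    rw [hv, Function.update_idem]; exact Function.update_eq_self i u
  have hvw : Function.update v k (spikedCost p) = w := by
    funext l
    by_cases h : l = k
    · rw [h, Function.update_self]
    · have : l = i := by omega
      rw [Function.update_of_ne h, this, hvi]
  have hi := hSP v hv0 i 1 fun _ => zero_le_one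
  have hk := hSP v hv0 k (spikedCost p) (spikedCost_nonneg p)
  rw [hvu, hvi, sum_spikedCost, sum_spikedCost, Nat.cast_le] at hi
  rw [hvw, hvk, sum_ones, sum_ones, Nat.cast_le] at hk
  simp only [mem_filter, mem_univ, true_and, if_neg hp] at hi
  have := (hF u hu0 i).1 rfl
  have := (hF v hv0 k).1 hvk
  have := (hF w hw0 i).2 p rfl
  have := (hF w hw0 k).2 p rfl
  have := card_bundle_add_card_bundle (A v) hik
  have := card_bundle_add_card_bundle (A w) hik
  by_cases h : A w p = i
  · simp only [h, if_true] at *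
    exact ⟨trivial, by omega⟩
  · have hk' : A w p = k := by omega
    simp only [hk', if_true] at *
    omega

/-- If agent `i` does not receive `p` when both agents report the all-ones vector, then agent `i`
receives at most one item when reporting `spikedCost q` against `spikedCost p`, for `q ≠ p`. -/
lemma card_bundle_update_spikedCost_le_one {A : (Fin 2 → Fin 4 → ℝ) → Fin 4 → Fin 2}
    (hSP : IsStrategyproof A) (hF : IsFairOnSpiked A) {i : Fin 2} {p q : Fin 4} (hpq : p ≠ q)
    (hp : A (fun _ => 1) p ≠ i) :
    #{j | A (Function.update (fun _ => spikedCost p) i (spikedCost q)) j = i} ≤ 1 := by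
  obtain ⟨hpi, hcard⟩ := bundle_of_const_spikedCost hSP hF hp
  have hq : A (fun _ => spikedCost p) q ≠ i := fun hqi =>
    hpq (card_le_one.mp hcard p (by simpa using hpi) q (by simpa using hqi))
  set c : Fin 2 → Fin 4 → ℝ := Function.update (fun _ => spikedCost p) i (spikedCost q) with hc
  have hc0 : ∀ l j, 0 ≤ c l j := by
    intro l j
    by_cases h : l = i
    · rw [h, hc, Function.update_self]; exact spikedCost_nonneg q j
    · rw [hc, Function.update_of_ne h]; exact spikedCost_nonneg p j
  have hback : Function.update c i (spikedCost p) = fun _ => spikedCost p := by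
    rw [hc, Function.update_idem]; exact Function.update_eq_self i _
  have h := hSP c hc0 i (spikedCost p) (spikedCost_nonneg p)
  rw [hback, show c i = spikedCost q from Function.update_self .., sum_spikedCost, sum_spikedCost,
    Nat.cast_le] at h
  simp only [mem_filter, mem_univ, true_and, if_neg hq] at h
  omega

lemma not_isFairOnSpiked {A : (Fin 2 → Fin 4 → ℝ) → Fin 4 → Fin 2} (hSP : IsStrategyproof A) :
    ¬ IsFairOnSpiked A := by
  intro hF
  set u : Fin 2 → Fin 4 → ℝ := fun _ => 1 with hu
  have hn (i : Fin 2) : #{j | A u j = i} ≤ 2 := (hF u (fun _ _ => zero_le_one) i).1 rfl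
  have hsum (x : Fin 4 → Fin 2) := card_bundle_add_card_bundle x (zero_ne_one : (0 : Fin 2) ≠ 1)
  obtain ⟨p, hp⟩ : ∃ p, A u p = 0 := by
    have : 0 < #{j | A u j = 0} := by have := hn 1; have := hsum (A u); omega
    simpa [Finset.Nonempty] using card_pos.mp this
  obtain ⟨q, hq⟩ : ∃ q, A u q = 1 := by
    have : 0 < #{j | A u j = 1} := by have := hn 0; have := hsum (A u); omega
    simpa [Finset.Nonempty] using card_pos.mp this
  have hpq : p ≠ q := by rintro rfl; simp [hp] at hq
  have h1 := card_bundle_update_spikedCost_le_one hSP hF (i := 1) hpq (by simp [← hu, hp])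
  have h0 := card_bundle_update_spikedCost_le_one hSP hF (i := 0) hpq.symm (by simp [← hu, hq])
  have heq : Function.update (fun _ => spikedCost p) (1 : Fin 2) (spikedCost q) =
      Function.update (fun _ => spikedCost q) (0 : Fin 2) (spikedCost p) := by
    funext l
    fin_cases l <;> rfl
  rw [heq] at h1
  have := hsum (A (Function.update (fun _ => spikedCost q) 0 (spikedCost p)))
  omega

/-- no deterministic strategyproof cardinal algorithm for 2 agents
and 4 chores has approximation ratio smaller than 4/3: for every deterministic SP
algorithm `A` (mapping nonnegative cost profiles to allocations `Fin 4 → Fin 2`)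
and every `ε > 0`, there is a profile on which some agent's bundle costs more
than `(4/3 − ε)·MMS_i`. -/
theorem cardinal_sp_lower_bound
    (A : (Fin 2 → Fin 4 → ℝ) → (Fin 4 → Fin 2))
    (hSP : ∀ c : Fin 2 → Fin 4 → ℝ, (∀ i j, 0 ≤ c i j) →
      ∀ (i : Fin 2) (c'i : Fin 4 → ℝ), (∀ j, 0 ≤ c'i j) →
      ∑ j ∈ Finset.univ.filter (fun j => A c j = i), c i j ≤
        ∑ j ∈ Finset.univ.filter (fun j => A (Function.update c i c'i) j = i), c i j)
    (ε : ℝ) (hε : 0 < ε) :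
    ∃ c : Fin 2 → Fin 4 → ℝ,
      (∀ i j, 0 ≤ c i j) ∧
      ∃ i : Fin 2,
        (4 / 3 - ε) * MMS 2 4 (c i) <
          ∑ j ∈ Finset.univ.filter (fun j => A c j = i), c i j := by
  by_contra! h
  exact not_isFairOnSpiked hSP (isFairOnSpiked_of_le_mul_mms hε h)
end

section
/- In the 3-agent divide-and-choose partition, each bundle is acceptable to agent 1: suppose the items 1,…,m satisfy c_{1,1} ≥ c_{1,2} ≥ … ≥ c_{1,m} ≥ 0 and define S_1 = {1}, S_2 = {j : j even}, S_3 = {j : j odd, j ≥ 3}. Then c_1(S_1) ≤ MMS_1 and c_1(S_3) ≤ c_1(S_2) ≤ (1/2)·c_1(M) ≤ (3/2)·MMS_1; in particular each of the three bundles has c_1-cost at most (3/2)·MMS_1, where MMS_1 is defined with respect to partitions into 3 bundles. -/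
/-- A sum of nonnegative terms dominates any sum that maps injectively into it with larger terms. -/
theorem Finset.sum_le_sum_of_injOn_of_le {ι : Type*} {f : ι → ℝ} {s t : Finset ι} (g : ι → ι)
    (hg : Set.InjOn g s) (hst : ∀ i ∈ s, g i ∈ t) (hf : ∀ i ∈ t, 0 ≤ f i)
    (hle : ∀ i ∈ s, f i ≤ f (g i)) : ∑ i ∈ s, f i ≤ ∑ i ∈ t, f i := by
  classical
  calc ∑ i ∈ s, f i ≤ ∑ i ∈ s, f (g i) := Finset.sum_le_sum hle
    _ = ∑ i ∈ s.image g, f i := (Finset.sum_image hg).symm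
    _ ≤ ∑ i ∈ t, f i :=
      Finset.sum_le_sum_of_subset_of_nonneg (Finset.image_subset_iff.2 hst) fun i hi _ => hf i hi

/-- For sorted costs, a bundle of positive positions costs at most any bundle containing all of
its predecessors. -/
theorem sum_le_sum_of_pred_mem {m : ℕ} {c : Fin m → ℝ} (hc : ∀ j, 0 ≤ c j) (hsorted : Antitone c)
    {s t : Finset (Fin m)} (hpos : ∀ j ∈ s, 0 < (j : ℕ))
    (hst : ∀ j ∈ s, (⟨(j : ℕ) - 1, by omega⟩ : Fin m) ∈ t) :
    ∑ j ∈ s, c j ≤ ∑ j ∈ t, c j := by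
  refine Finset.sum_le_sum_of_injOn_of_le (fun j => ⟨(j : ℕ) - 1, by omega⟩) ?_ hst
    (fun j _ => hc j) fun j _ => hsorted (Fin.le_def.2 (Nat.sub_le _ _))
  intro i hi j hj hij
  have hi' := hpos i hi
  have hj' := hpos j hj
  simp only [Fin.mk.injEq] at hij
  exact Fin.ext (by omega)

/-- The cost of a bundle is at most the largest cost of a bundle in the partition. -/
theorem bundle_le_iSup {n m : ℕ} (c : Fin m → ℝ) (P : Fin m → Fin n) (k : Fin n) :
    ∑ j ∈ Finset.univ.filter (fun j => P j = k), c j ≤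
      ⨆ k : Fin n, ∑ j ∈ Finset.univ.filter (fun j => P j = k), c j :=
  le_ciSup (f := fun k => ∑ j ∈ Finset.univ.filter (fun j => P j = k), c j)
    (Set.finite_range _).bddAbove k

/-- Every single item costs at most the maxmin share. -/
theorem item_le_MMS {n m : ℕ} [NeZero n] {c : Fin m → ℝ} (hc : ∀ j, 0 ≤ c j) (i : Fin m) :
    c i ≤ MMS n m c := by
  refine le_ciInf fun P => le_trans ?_ (bundle_le_iSup c P (P i))
  exact Finset.single_le_sum (fun j _ => hc j) (by simp)

/-- in the 3-agent divide-and-choose partition, each bundle is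
acceptable to agent 1.  Items `0,…,m-1` satisfy `c 0 ≥ c 1 ≥ … ≥ 0`;
`S₁ = {0}`, `S₂` = items in odd positions, `S₃` = items in even positions `≥ 2`.
Then `c(S₁) ≤ MMS₁` and `c(S₃) ≤ c(S₂) ≤ (1/2)·c(M) ≤ (3/2)·MMS₁` (maxmin share
with respect to 3 bundles). -/
theorem divideAndChoose_bundles_ok (m : ℕ) (hm : 0 < m)
    (c : Fin m → ℝ) (hc : ∀ j, 0 ≤ c j)
    (hsorted : ∀ j j' : Fin m, j ≤ j' → c j' ≤ c j) :
    c ⟨0, hm⟩ ≤ MMS 3 m c ∧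
    ∑ j ∈ Finset.univ.filter (fun j : Fin m => (j : ℕ) % 2 = 0 ∧ 2 ≤ (j : ℕ)), c j ≤
      ∑ j ∈ Finset.univ.filter (fun j : Fin m => (j : ℕ) % 2 = 1), c j ∧
    ∑ j ∈ Finset.univ.filter (fun j : Fin m => (j : ℕ) % 2 = 1), c j ≤
      (1 / 2 : ℝ) * ∑ j, c j ∧
    (1 / 2 : ℝ) * ∑ j, c j ≤ (3 / 2 : ℝ) * MMS 3 m c := by
  refine ⟨item_le_MMS hc _, ?_, ?_, ?_⟩
  · refine sum_le_sum_of_pred_mem hc hsorted (fun j hj => ?_) fun j hj => ?_ <;>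
      simp only [Finset.mem_filter, Finset.mem_univ, true_and] at hj ⊢ <;> omega
  · have hle : ∑ j ∈ Finset.univ.filter (fun j : Fin m => (j : ℕ) % 2 = 1), c j ≤
        ∑ j ∈ Finset.univ.filter (fun j : Fin m => ¬ (j : ℕ) % 2 = 1), c j := by
      refine sum_le_sum_of_pred_mem hc hsorted (fun j hj => ?_) fun j hj => ?_ <;>
        simp only [Finset.mem_filter, Finset.mem_univ, true_and] at hj ⊢ <;> omega
    have hsplit := Finset.sum_filter_add_sum_filter_not Finset.univ
      (fun j : Fin m => (j : ℕ) % 2 = 1) c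
    linarith
  · have htotal := sum_le_mul_MMS (n := 3) c
    push_cast at htotal
    linarith
end
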